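/- Let ℰ, 𝒜 ∈ ℝ^{N×N} with ℰ invertible and the pencil λℰ − 𝒜 c-stable, let 𝒞 ∈ ℝ^{p×N}, and let Ω = [−ω₂, −ω₁] ∪ [ω₁, ω₂] with 0 ≤ ω₁ < ω₂ < ∞. Define F_Ω = (1/2π) ∫_Ω (iωℰ − 𝒜)^{-1} dω and Q_Ω = (1/2π) ∫_Ω (−iωℰ − 𝒜)^{-ᵀ} 𝒞ᵀ 𝒞 (iωℰ − 𝒜)^{-1} dω. Then Q_Ω is a real symmetric positive semidefinite matrix and satisfies the frequency-limited Lyapunov equation 𝒜ᵀ Q_Ω ℰ + ℰᵀ Q_Ω 𝒜 + 𝒞_Ωᵀ 𝒞 + 𝒞ᵀ 𝒞_Ω = 0, where 𝒞_Ω = 𝒞 F_Ω ℰ. -/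

import Mathlib

open Matrix MeasureTheory

noncomputable section

/-- A matrix pencil `λℰ − 𝒜` (with real square matrices) is c-stable if all complex `λ`
with `det (λℰ − 𝒜) = 0` lie in the open left complex half-plane. -/
def CStablePencil {N : ℕ} (ℰ 𝒜 : Matrix (Fin N) (Fin N) ℝ) : Prop :=
  ∀ μ : ℂ, (μ • ℰ.map Complex.ofReal - 𝒜.map Complex.ofReal).det = 0 → μ.re < 0

/-- Complexification of a real matrix. -/
def toC {a b : ℕ} (M : Matrix (Fin a) (Fin b) ℝ) : Matrix (Fin a) (Fin b) ℂ :=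
  M.map Complex.ofReal

open scoped ComplexOrder

/-- The entrywise integral over `S` of a matrix-valued function of a real variable. -/
def entrywiseIntegral {m n : Type*} (S : Set ℝ) (f : ℝ → Matrix m n ℂ) : Matrix m n ℂ :=
  Matrix.of fun i j => ∫ ω in S, f ω i j

lemma entrywiseIntegral_add {m n : Type*} {S : Set ℝ} (hS : IsCompact S)
    {f g : ℝ → Matrix m n ℂ} (hf : Continuous f) (hg : Continuous g) :
    entrywiseIntegral S (fun ω => f ω + g ω) = entrywiseIntegral S f + entrywiseIntegral S g := by
  ext i j
  exact integral_add ((hf.matrix_elem i j).continuousOn.integrableOn_compact hS)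
    ((hg.matrix_elem i j).continuousOn.integrableOn_compact hS)

lemma entrywiseIntegral_const_mul {l m n : Type*} [Fintype m] {S : Set ℝ} (hS : IsCompact S)
    (M : Matrix l m ℂ) {f : ℝ → Matrix m n ℂ} (hf : Continuous f) :
    entrywiseIntegral S (fun ω => M * f ω) = M * entrywiseIntegral S f := by
  ext i j
  simp only [entrywiseIntegral, Matrix.of_apply, Matrix.mul_apply]
  rw [integral_finsetSum]
  · simp only [integral_const_mul]
  · exact fun k _ =>
      ((hf.matrix_elem k j).continuousOn.integrableOn_compact hS).const_mul (M i k)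

lemma entrywiseIntegral_transpose {m n : Type*} (S : Set ℝ) (f : ℝ → Matrix m n ℂ) :
    entrywiseIntegral S (fun ω => (f ω)ᵀ) = (entrywiseIntegral S f)ᵀ := rfl

lemma entrywiseIntegral_mul_const {l m n : Type*} [Fintype m] {S : Set ℝ} (hS : IsCompact S)
    {f : ℝ → Matrix l m ℂ} (hf : Continuous f) (M : Matrix m n ℂ) :
    entrywiseIntegral S (fun ω => f ω * M) = entrywiseIntegral S f * M := by
  rw [← Matrix.transpose_inj, ← entrywiseIntegral_transpose]
  simp only [Matrix.transpose_mul]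
  rw [entrywiseIntegral_const_mul hS _ hf.matrix_transpose, entrywiseIntegral_transpose]

lemma setIntegral_comp_neg_of_neg_eq {S : Set ℝ} (hS : -S = S) (f : ℝ → ℂ) :
    ∫ ω in S, f (-ω) = ∫ ω in S, f ω := by
  have h := (Measure.measurePreserving_neg (volume : Measure ℝ)).setIntegral_preimage_emb
    (MeasurableEquiv.neg ℝ).measurableEmbedding f S
  rwa [Set.neg_preimage, hS] at h

lemma entrywiseIntegral_comp_neg {m n : Type*} {S : Set ℝ} (hS : -S = S)
    (f : ℝ → Matrix m n ℂ) :
    entrywiseIntegral S (fun ω => f (-ω)) = entrywiseIntegral S f := by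
  ext i j
  exact setIntegral_comp_neg_of_neg_eq hS fun ω => f ω i j

lemma neg_symmetric_band (a b : ℝ) :
    -(Set.Icc (-b) (-a) ∪ Set.Icc a b) = Set.Icc (-b) (-a) ∪ Set.Icc a b := by
  simp [Set.union_neg, Set.union_comm]

/-- The resolvent `(iωℰ − 𝒜)⁻¹` of the pencil on the imaginary axis. -/
def pencilResolvent {N : ℕ} (ℰ 𝒜 : Matrix (Fin N) (Fin N) ℝ) (ω : ℝ) :
    Matrix (Fin N) (Fin N) ℂ :=
  ((Complex.I * (ω : ℂ)) • toC ℰ - toC 𝒜)⁻¹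

lemma pencilResolvent_neg {N : ℕ} (ℰ 𝒜 : Matrix (Fin N) (Fin N) ℝ) (ω : ℝ) :
    pencilResolvent ℰ 𝒜 (-ω) = ((-(Complex.I * (ω : ℂ))) • toC ℰ - toC 𝒜)⁻¹ := by
  simp [pencilResolvent]

lemma CStablePencil.isUnit_det {N : ℕ} {ℰ 𝒜 : Matrix (Fin N) (Fin N) ℝ}
    (h : CStablePencil ℰ 𝒜) (ω : ℝ) :
    IsUnit ((Complex.I * (ω : ℂ)) • toC ℰ - toC 𝒜).det := by
  rw [isUnit_iff_ne_zero]
  intro h0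
  simpa using h _ h0

lemma CStablePencil.continuous_pencilResolvent {N : ℕ} {ℰ 𝒜 : Matrix (Fin N) (Fin N) ℝ}
    (h : CStablePencil ℰ 𝒜) : Continuous (pencilResolvent ℰ 𝒜) := by
  have hP : Continuous fun ω : ℝ => (Complex.I * (ω : ℂ)) • toC ℰ - toC 𝒜 := by fun_prop
  unfold pencilResolvent
  simp only [Matrix.inv_def, Ring.inverse_eq_inv']
  exact (hP.matrix_det.inv₀ fun ω => (h.isUnit_det ω).ne_zero).smul hP.matrix_adjugate

lemma toC_conjTranspose {a b : ℕ} (M : Matrix (Fin a) (Fin b) ℝ) : (toC M)ᴴ = (toC M)ᵀ := by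
  ext i j
  simp [toC]

/-- The resolvent of a real pencil satisfies `R(−ω)ᵀ = R(ω)ᴴ`. -/
lemma pencilResolvent_neg_transpose {N : ℕ} (ℰ 𝒜 : Matrix (Fin N) (Fin N) ℝ) (ω : ℝ) :
    (pencilResolvent ℰ 𝒜 (-ω))ᵀ = (pencilResolvent ℰ 𝒜 ω)ᴴ := by
  rw [pencilResolvent_neg, pencilResolvent, Matrix.conjTranspose_nonsing_inv,
    Matrix.transpose_nonsing_inv]
  simp [toC_conjTranspose]

/-- The integrand `R(−ω)ᵀ 𝒞ᵀ 𝒞 R(ω)` of the observability Gramian. -/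
def gramianIntegrand {N p : ℕ} (ℰ 𝒜 : Matrix (Fin N) (Fin N) ℝ)
    (𝒞 : Matrix (Fin p) (Fin N) ℝ) (ω : ℝ) : Matrix (Fin N) (Fin N) ℂ :=
  (pencilResolvent ℰ 𝒜 (-ω))ᵀ * (toC 𝒞)ᵀ * toC 𝒞 * pencilResolvent ℰ 𝒜 ω

lemma gramianIntegrand_posSemidef {N p : ℕ} (ℰ 𝒜 : Matrix (Fin N) (Fin N) ℝ)
    (𝒞 : Matrix (Fin p) (Fin N) ℝ) (ω : ℝ) : (gramianIntegrand ℰ 𝒜 𝒞 ω).PosSemidef := by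
  have h := Matrix.posSemidef_conjTranspose_mul_self (toC 𝒞 * pencilResolvent ℰ 𝒜 ω)
  rwa [Matrix.conjTranspose_mul, toC_conjTranspose, ← pencilResolvent_neg_transpose,
    ← Matrix.mul_assoc] at h

lemma gramianIntegrand_neg {N p : ℕ} (ℰ 𝒜 : Matrix (Fin N) (Fin N) ℝ)
    (𝒞 : Matrix (Fin p) (Fin N) ℝ) (ω : ℝ) :
    gramianIntegrand ℰ 𝒜 𝒞 (-ω) = (gramianIntegrand ℰ 𝒜 𝒞 ω)ᵀ := by
  simp [gramianIntegrand, Matrix.mul_assoc]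

lemma CStablePencil.continuous_gramianIntegrand {N p : ℕ} {ℰ 𝒜 : Matrix (Fin N) (Fin N) ℝ}
    (h : CStablePencil ℰ 𝒜) (𝒞 : Matrix (Fin p) (Fin N) ℝ) :
    Continuous (gramianIntegrand ℰ 𝒜 𝒞) := by
  have hR := h.continuous_pencilResolvent
  unfold gramianIntegrand
  exact (((hR.comp continuous_neg).matrix_transpose.matrix_mul continuous_const).matrix_mul
    continuous_const).matrix_mul hR

/-- The Lyapunov equation satisfied pointwise by the Gramian integrand. -/
lemma CStablePencil.gramianIntegrand_lyapunov {N p : ℕ} {ℰ 𝒜 : Matrix (Fin N) (Fin N) ℝ}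
    (h : CStablePencil ℰ 𝒜) (𝒞 : Matrix (Fin p) (Fin N) ℝ) (ω : ℝ) :
    (toC 𝒜)ᵀ * gramianIntegrand ℰ 𝒜 𝒞 ω * toC ℰ + (toC ℰ)ᵀ * gramianIntegrand ℰ 𝒜 𝒞 ω * toC 𝒜 +
      (toC 𝒞 * pencilResolvent ℰ 𝒜 (-ω) * toC ℰ)ᵀ * toC 𝒞 +
      (toC 𝒞)ᵀ * (toC 𝒞 * pencilResolvent ℰ 𝒜 ω * toC ℰ) = 0 := by
  set z : ℂ := Complex.I * (ω : ℂ) with hz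
  set G := gramianIntegrand ℰ 𝒜 𝒞 ω with hG
  have hright : G * (z • toC ℰ - toC 𝒜) =
      (pencilResolvent ℰ 𝒜 (-ω))ᵀ * (toC 𝒞)ᵀ * toC 𝒞 := by
    have hinv : pencilResolvent ℰ 𝒜 ω * (z • toC ℰ - toC 𝒜) = 1 :=
      Matrix.nonsing_inv_mul _ (h.isUnit_det ω)
    rw [hG, gramianIntegrand, Matrix.mul_assoc _ (pencilResolvent ℰ 𝒜 ω), hinv, Matrix.mul_one]
  have hleft : ((-z) • toC ℰ - toC 𝒜)ᵀ * G =
      (toC 𝒞)ᵀ * toC 𝒞 * pencilResolvent ℰ 𝒜 ω := by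
    have hu : IsUnit ((-z) • toC ℰ - toC 𝒜).det := by simpa [hz] using h.isUnit_det (-ω)
    rw [hG, gramianIntegrand, pencilResolvent_neg, ← hz]
    simp only [← Matrix.mul_assoc]
    rw [← Matrix.transpose_mul, Matrix.nonsing_inv_mul _ hu, Matrix.transpose_one, Matrix.one_mul]
  have hright' := congrArg ((toC ℰ)ᵀ * ·) hright
  have hleft' := congrArg (· * toC ℰ) hleft
  simp only [Matrix.transpose_mul, Matrix.mul_sub, Matrix.sub_mul, Matrix.transpose_sub,
    Matrix.transpose_smul, Matrix.smul_mul, Matrix.mul_smul, Matrix.mul_assoc, neg_smul,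
    Matrix.transpose_neg, Matrix.neg_mul] at *
  rw [← hright', ← hleft']
  abel

/-- The Lyapunov equation satisfied by the unnormalized frequency-limited Gramian. -/
lemma CStablePencil.entrywiseIntegral_lyapunov {N p : ℕ} {ℰ 𝒜 : Matrix (Fin N) (Fin N) ℝ}
    (h : CStablePencil ℰ 𝒜) (𝒞 : Matrix (Fin p) (Fin N) ℝ) {S : Set ℝ} (hS : IsCompact S)
    (hneg : -S = S) :
    (toC 𝒜)ᵀ * entrywiseIntegral S (gramianIntegrand ℰ 𝒜 𝒞) * toC ℰ +
      (toC ℰ)ᵀ * entrywiseIntegral S (gramianIntegrand ℰ 𝒜 𝒞) * toC 𝒜 +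
      (toC 𝒞 * entrywiseIntegral S (pencilResolvent ℰ 𝒜) * toC ℰ)ᵀ * toC 𝒞 +
      (toC 𝒞)ᵀ * (toC 𝒞 * entrywiseIntegral S (pencilResolvent ℰ 𝒜) * toC ℰ) = 0 := by
  have hG := h.continuous_gramianIntegrand 𝒞
  have hR := h.continuous_pencilResolvent
  have hR' : Continuous fun ω => pencilResolvent ℰ 𝒜 (-ω) := hR.comp continuous_neg
  have hAG := (continuous_const (y := (toC 𝒜)ᵀ)).matrix_mul hG
  have hEG := (continuous_const (y := (toC ℰ)ᵀ)).matrix_mul hG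
  have hCR := (continuous_const (y := toC 𝒞)).matrix_mul hR
  have hCR' := (continuous_const (y := toC 𝒞)).matrix_mul hR'
  have hCRE := hCR.matrix_mul (continuous_const (y := toC ℰ))
  have hCRE' := (hCR'.matrix_mul (continuous_const (y := toC ℰ))).matrix_transpose
  have hAGE := hAG.matrix_mul (continuous_const (y := toC ℰ))
  have hEGA := hEG.matrix_mul (continuous_const (y := toC 𝒜))
  have hCREC := hCRE'.matrix_mul (continuous_const (y := toC 𝒞))
  have hCCRE := (continuous_const (y := (toC 𝒞)ᵀ)).matrix_mul hCRE
  have key := congrArg (entrywiseIntegral S) (funext fun ω => h.gramianIntegrand_lyapunov 𝒞 ω)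
  rw [entrywiseIntegral_add hS ((hAGE.fun_add hEGA).fun_add hCREC) hCCRE,
    entrywiseIntegral_add hS (hAGE.fun_add hEGA) hCREC, entrywiseIntegral_add hS hAGE hEGA,
    entrywiseIntegral_mul_const hS hAG, entrywiseIntegral_const_mul hS _ hG,
    entrywiseIntegral_mul_const hS hEG, entrywiseIntegral_const_mul hS _ hG,
    entrywiseIntegral_mul_const hS hCRE', entrywiseIntegral_transpose,
    entrywiseIntegral_mul_const hS hCR', entrywiseIntegral_const_mul hS _ hR',
    entrywiseIntegral_comp_neg hneg,
    entrywiseIntegral_const_mul hS _ hCRE, entrywiseIntegral_mul_const hS hCR,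
    entrywiseIntegral_const_mul hS _ hR] at key
  rw [key]
  ext i j
  simp [entrywiseIntegral]

/-- The entrywise integral of positive semidefinite matrices is positive semidefinite. -/
lemma entrywiseIntegral_posSemidef {n : Type*} [Fintype n] {S : Set ℝ} (hS : IsCompact S)
    {f : ℝ → Matrix n n ℂ} (hf : Continuous f) (hpos : ∀ ω, (f ω).PosSemidef) :
    (entrywiseIntegral S f).PosSemidef := by
  refine Matrix.PosSemidef.of_dotProduct_mulVec_nonneg ?_ fun x => ?_
  · ext i j
    simp only [Matrix.conjTranspose_apply, entrywiseIntegral, Matrix.of_apply]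
    refine integral_conj.symm.trans (integral_congr_ae (.of_forall fun ω => ?_))
    exact (hpos ω).isHermitian.apply i j
  · have hint : ∀ i j, IntegrableOn (fun ω => f ω i j) S := fun i j =>
      (hf.matrix_elem i j).continuousOn.integrableOn_compact hS
    have h : star x ⬝ᵥ entrywiseIntegral S f *ᵥ x = ∫ ω in S, star x ⬝ᵥ f ω *ᵥ x := by
      simp only [dotProduct, Matrix.mulVec, entrywiseIntegral, Matrix.of_apply]
      rw [integral_finsetSum _ fun i _ => (integrable_finsetSum _ fun j _ =>
        (hint i j).mul_const _).const_mul _]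
      refine Finset.sum_congr rfl fun i _ => ?_
      rw [integral_const_mul, integral_finsetSum _ fun j _ => (hint i j).mul_const _]
      simp only [integral_mul_const]
    rw [h]
    exact integral_nonneg fun ω => (hpos ω).dotProduct_mulVec_nonneg x

/-- A symmetric Hermitian complex matrix has real entries. -/
lemma Matrix.IsHermitian.im_eq_zero_of_isSymm {n : Type*} {M : Matrix n n ℂ}
    (h : M.IsHermitian) (hs : M.IsSymm) (i j : n) : (M i j).im = 0 := by
  rw [← Complex.conj_eq_iff_im]
  exact (h.apply j i).trans (hs.apply i j)

lemma Matrix.PosSemidef.map_re {n : Type*} [Fintype n] {M : Matrix n n ℂ}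
    (h : M.PosSemidef) : (Matrix.of fun i j => (M i j).re : Matrix n n ℝ).PosSemidef := by
  refine Matrix.PosSemidef.of_dotProduct_mulVec_nonneg ?_ fun x => ?_
  · ext i j
    simp [← h.isHermitian.apply i j]
  · have hx := (Complex.nonneg_iff.mp (h.dotProduct_mulVec_nonneg fun i => (x i : ℂ))).1
    simpa [dotProduct, Matrix.mulVec] using hx

/-- For a c-stable pencil with invertible `ℰ` and the symmetric frequency range
`Ω = [−ω₂, −ω₁] ∪ [ω₁, ω₂]`, the frequency-limited observability Gramian factor
`Q_Ω = (1/2π) ∫_Ω (−iωℰ − 𝒜)⁻ᵀ 𝒞ᵀ 𝒞 (iωℰ − 𝒜)⁻¹ dω` is real symmetric positive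
semidefinite and satisfies the frequency-limited Lyapunov equation
`𝒜ᵀ Q_Ω ℰ + ℰᵀ Q_Ω 𝒜 + 𝒞_Ωᵀ 𝒞 + 𝒞ᵀ 𝒞_Ω = 0` with `𝒞_Ω = 𝒞 F_Ω ℰ`, where
`F_Ω = (1/2π) ∫_Ω (iωℰ − 𝒜)⁻¹ dω`. -/
theorem frequency_limited_observability_gramian {N p : ℕ}
    (ℰ 𝒜 : Matrix (Fin N) (Fin N) ℝ) (𝒞 : Matrix (Fin p) (Fin N) ℝ)
    (hE : IsUnit ℰ) (hstab : CStablePencil ℰ 𝒜)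
    (ω₁ ω₂ : ℝ) (hω₁ : 0 ≤ ω₁) (hω₁₂ : ω₁ < ω₂)
    (FΩ QΩ : Matrix (Fin N) (Fin N) ℂ)
    (hF : FΩ = Matrix.of fun i j =>
      ((1 / (2 * Real.pi) : ℝ) : ℂ) *
        ∫ ω in Set.Icc (-ω₂) (-ω₁) ∪ Set.Icc ω₁ ω₂,
          ((((Complex.I * (ω : ℂ)) • toC ℰ - toC 𝒜)⁻¹) i j))
    (hQ : QΩ = Matrix.of fun i j =>
      ((1 / (2 * Real.pi) : ℝ) : ℂ) *
        ∫ ω in Set.Icc (-ω₂) (-ω₁) ∪ Set.Icc ω₁ ω₂,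
          (((((-(Complex.I * (ω : ℂ))) • toC ℰ - toC 𝒜)⁻¹)ᵀ * (toC 𝒞)ᵀ * toC 𝒞 *
            ((Complex.I * (ω : ℂ)) • toC ℰ - toC 𝒜)⁻¹) i j)) :
    (∀ i j, (QΩ i j).im = 0) ∧
    (Matrix.of fun i j => (QΩ i j).re : Matrix (Fin N) (Fin N) ℝ).PosSemidef ∧
    (toC 𝒜)ᵀ * QΩ * toC ℰ + (toC ℰ)ᵀ * QΩ * toC 𝒜 +
      (toC 𝒞 * FΩ * toC ℰ)ᵀ * toC 𝒞 + (toC 𝒞)ᵀ * (toC 𝒞 * FΩ * toC ℰ) = 0 := by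
  have hS : IsCompact (Set.Icc (-ω₂) (-ω₁) ∪ Set.Icc ω₁ ω₂) := isCompact_Icc.union isCompact_Icc
  have hneg := neg_symmetric_band ω₁ ω₂
  set S := Set.Icc (-ω₂) (-ω₁) ∪ Set.Icc ω₁ ω₂
  set c : ℝ := 1 / (2 * Real.pi)
  have hc : 0 ≤ c := by positivity
  have hF' : FΩ = (c : ℂ) • entrywiseIntegral S (pencilResolvent ℰ 𝒜) := hF
  have hQ' : QΩ = (c : ℂ) • entrywiseIntegral S (gramianIntegrand ℰ 𝒜 𝒞) := by
    simp only [hQ, ← pencilResolvent_neg]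
    rfl
  have hpsd : QΩ.PosSemidef := by
    rw [hQ']
    exact (entrywiseIntegral_posSemidef hS (hstab.continuous_gramianIntegrand 𝒞)
      (gramianIntegrand_posSemidef ℰ 𝒜 𝒞)).smul (by exact_mod_cast hc)
  have hsymm : QΩ.IsSymm := by
    rw [Matrix.IsSymm, hQ', Matrix.transpose_smul, ← entrywiseIntegral_transpose]
    simp only [← gramianIntegrand_neg]
    rw [entrywiseIntegral_comp_neg hneg]
  refine ⟨hpsd.isHermitian.im_eq_zero_of_isSymm hsymm, hpsd.map_re, ?_⟩
  have h := congrArg ((c : ℂ) • ·) (hstab.entrywiseIntegral_lyapunov 𝒞 hS hneg)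
  rw [hF', hQ']
  simpa only [smul_add, smul_zero, Matrix.mul_smul, Matrix.smul_mul, Matrix.transpose_smul] using h
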